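/- Let S be a finite set, and for each e ∈ S let w̄(e) ∈ [0,1], ŵ(e) ∈ [0,1], c(e) ≥ 0 with |w̄(e) − ŵ(e)| < c(e). Partition S into disjoint sets T (suboptimal items) and the rest, and let V be another finite set disjoint from T with weights w̄(e) ∈ [0,1] for e ∈ V. If ∏_{e∈T} min(ŵ(e)+c(e),1) ≥ ∏_{e∈V} min(ŵ(e)+c(e),1), then 2·Σ_{e∈T} c(e) ≥ ∏_{e∈V} w̄(e) − ∏_{e∈T} w̄(e). -/

import Mathlib

/-!
Optimism: under the confidence bounds the true product over `V` is at most its upper confidence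
product, hence at most the upper confidence product over `T`. The latter exceeds the true product
over `T` by at most the sum of the factorwise errors, since all factors lie in `[0, 1]`, and each
factorwise error is at most twice the confidence radius.
-/

section OrderedRing

variable {E R : Type*} [CommRing R] [PartialOrder R] [IsOrderedRing R]

theorem prod_sub_prod_le_sum_sub {s : Finset E} {u w : E → R}
    (hw : ∀ e ∈ s, 0 ≤ w e) (hwu : ∀ e ∈ s, w e ≤ u e) (hu : ∀ e ∈ s, u e ≤ 1) :
    ∏ e ∈ s, u e - ∏ e ∈ s, w e ≤ ∑ e ∈ s, (u e - w e) := by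
  induction s using Finset.cons_induction with
  | empty => simp
  | cons a s ha ih =>
    simp only [Finset.forall_mem_cons] at hw hwu hu
    simp only [Finset.prod_cons, Finset.sum_cons]
    have prod_mono : ∏ e ∈ s, w e ≤ ∏ e ∈ s, u e := Finset.prod_le_prod hw.2 hwu.2
    have prod_le_one : ∏ e ∈ s, w e ≤ 1 :=
      Finset.prod_le_one hw.2 fun e he => (hwu.2 e he).trans (hu.2 e he)
    calc u a * ∏ e ∈ s, u e - w a * ∏ e ∈ s, w e
        = (u a - w a) * ∏ e ∈ s, w e + u a * (∏ e ∈ s, u e - ∏ e ∈ s, w e) := by ring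
      _ ≤ (u a - w a) + (∏ e ∈ s, u e - ∏ e ∈ s, w e) :=
          add_le_add (mul_le_of_le_one_right (sub_nonneg.2 hwu.1) prod_le_one)
            (mul_le_of_le_one_left (sub_nonneg.2 prod_mono) hu.1)
      _ ≤ (u a - w a) + ∑ e ∈ s, (u e - w e) := by grw [ih hw.2 hwu.2 hu.2]

theorem prod_sub_prod_le_sum_sub_of_prod_le_prod {T V : Finset E} {u w : E → R}
    (hwT : ∀ e ∈ T, 0 ≤ w e) (hwuT : ∀ e ∈ T, w e ≤ u e) (huT : ∀ e ∈ T, u e ≤ 1)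
    (hwV : ∀ e ∈ V, 0 ≤ w e) (hwuV : ∀ e ∈ V, w e ≤ u e)
    (hVT : ∏ e ∈ V, u e ≤ ∏ e ∈ T, u e) :
    ∏ e ∈ V, w e - ∏ e ∈ T, w e ≤ ∑ e ∈ T, (u e - w e) :=
  calc ∏ e ∈ V, w e - ∏ e ∈ T, w e
      ≤ ∏ e ∈ T, u e - ∏ e ∈ T, w e :=
        sub_le_sub_right ((Finset.prod_le_prod hwV hwuV).trans hVT) _
    _ ≤ ∑ e ∈ T, (u e - w e) := prod_sub_prod_le_sum_sub hwT hwuT huT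

end OrderedRing

section ConfidenceInterval

variable {G : Type*} [AddCommGroup G] [LinearOrder G] [IsOrderedAddMonoid G] {x y r b : G}

theorem le_min_add_of_abs_sub_le (h : |x - y| ≤ r) (hb : x ≤ b) : x ≤ min (y + r) b :=
  le_min (sub_le_iff_le_add'.1 (abs_sub_le_iff.1 h).1) hb

theorem min_add_sub_le_two_nsmul_of_abs_sub_le (h : |x - y| ≤ r) :
    min (y + r) b - x ≤ 2 • r :=
  calc min (y + r) b - x
      ≤ y + r - x := sub_le_sub_right (min_le_left _ _) _
    _ = (y - x) + r := by abel
    _ ≤ r + r := add_le_add_left (abs_sub_le_iff.1 h).2 r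
    _ = 2 • r := (two_nsmul r).symm

end ConfidenceInterval

theorem stmt_19_general {E R : Type*} [DecidableEq E] [CommRing R] [LinearOrder R]
    [IsOrderedRing R] {T V : Finset E} {wbar what c : E → R}
    (hw : ∀ e ∈ T ∪ V, 0 ≤ wbar e ∧ wbar e ≤ 1)
    (hclose : ∀ e ∈ T ∪ V, |wbar e - what e| ≤ c e)
    (hUCB : ∏ e ∈ V, min (what e + c e) 1 ≤ ∏ e ∈ T, min (what e + c e) 1) :
    (∏ e ∈ V, wbar e) - ∏ e ∈ T, wbar e ≤ 2 * ∑ e ∈ T, c e := by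
  have optimistic : ∀ e ∈ T ∪ V, wbar e ≤ min (what e + c e) 1 := fun e he =>
    le_min_add_of_abs_sub_le (hclose e he) (hw e he).2
  rw [Finset.forall_mem_union] at hw hclose optimistic
  calc (∏ e ∈ V, wbar e) - ∏ e ∈ T, wbar e
      ≤ ∑ e ∈ T, (min (what e + c e) 1 - wbar e) :=
        prod_sub_prod_le_sum_sub_of_prod_le_prod (fun e he => (hw.1 e he).1) optimistic.1
          (fun _ _ => min_le_right _ _) (fun e he => (hw.2 e he).1) optimistic.2 hUCB
    _ ≤ ∑ e ∈ T, 2 • c e := Finset.sum_le_sum fun e he =>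
        min_add_sub_le_two_nsmul_of_abs_sub_le (hclose.1 e he)
    _ = 2 * ∑ e ∈ T, c e := by rw [Finset.sum_nsmul, two_nsmul, two_mul]

theorem stmt_19 (E : Type*) [DecidableEq E] (T V : Finset E) (hTV : Disjoint T V)
    (wbar what c : E → ℝ)
    (hw : ∀ e ∈ T ∪ V, 0 ≤ wbar e ∧ wbar e ≤ 1)
    (hhat : ∀ e ∈ T ∪ V, 0 ≤ what e ∧ what e ≤ 1)
    (hc : ∀ e ∈ T ∪ V, 0 ≤ c e)
    (hclose : ∀ e ∈ T ∪ V, |wbar e - what e| < c e)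
    (hUCB : ∏ e ∈ V, min (what e + c e) 1 ≤ ∏ e ∈ T, min (what e + c e) 1) :
    (∏ e ∈ V, wbar e) - ∏ e ∈ T, wbar e ≤ 2 * ∑ e ∈ T, c e :=
  stmt_19_general hw (fun e he => (hclose e he).le) hUCB
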